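/- Let c > 0 and R > 0. Let w : ℝ³ → ℝ be continuous on {x : |x| ≥ R}, twice continuously differentiable on {x : |x| > R}, satisfying Δw(x) ≥ c·w(x) for all |x| > R, and w(x) → 0 as |x| → ∞. Then there exists a constant C > 0 such that w(x) ≤ C·e^{−√c·|x|} for every x with |x| ≥ R. (Exponential decay of subsolutions on exterior domains, via comparison with the fundamental solution of −Δ + c.) -/

import Mathlib

noncomputable section

/-- `ℝ³` modeled as the Euclidean space on `Fin 3`. -/
abbrev E3 := EuclideanSpace ℝ (Fin 3)

/-- The `k`-th standard basis vector of `ℝ³`. -/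
noncomputable def e3 (k : Fin 3) : E3 := EuclideanSpace.single k 1

/-- The Laplacian of a real-valued function on `ℝ³`. -/
noncomputable def lapR (g : E3 → ℝ) (x : E3) : ℝ :=
  ∑ k, fderiv ℝ (fun y => fderiv ℝ g y (e3 k)) x (e3 k)

/-!
The function `C e^{-√c |x|}` is a supersolution of `Δg = c g` away from the origin, because
`Δ e^{-s|x|} = (s² - (n - 1) s / |x|) e^{-s|x|}` in dimension `n`. Choose `C` so large that it
dominates `w` on the inner sphere. If the difference `w - C e^{-√c |x|}` were positive somewhere,
then, being at most zero on the sphere and asymptotically at most zero, it would attain a positive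
maximum at an interior point; there its Laplacian would be at most zero, whereas `Δw ≥ c w` makes it
at least `c` times the positive maximum.
-/

open Filter Topology Module InnerProductSpace Laplacian

section SecondDerivative

lemma deriv_deriv_nonpos_of_isLocalMax {f : ℝ → ℝ} {a : ℝ} (hmax : IsLocalMax f a)
    (hf : ContinuousAt f a) : deriv (deriv f) a ≤ 0 := by
  by_contra! hpos
  have hmin : IsLocalMin f a := isLocalMin_of_deriv_deriv_pos hpos hmax.deriv_eq_zero hf
  have hconst : f =ᶠ[𝓝 a] fun _ => f a := by
    filter_upwards [hmax, hmin] with t hle hge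
    exact le_antisymm hle hge
  have hzero : deriv (deriv f) a = 0 := by simp [hconst.deriv.deriv_eq]
  exact hpos.ne' hzero

variable {𝕜 E F : Type*} [NontriviallyNormedField 𝕜] [NormedAddCommGroup E] [NormedSpace 𝕜 E]
  [NormedAddCommGroup F] [NormedSpace 𝕜 F] {f : E → F} {x : E}

lemma differentiableAt_fderiv_of_contDiffAt_two (hf : ContDiffAt 𝕜 2 f x) :
    DifferentiableAt 𝕜 (fderiv 𝕜 f) x :=
  (hf.fderiv_right (m := 1) (by norm_num)).differentiableAt (by simp)

lemma fderiv_fderiv_apply_const (hf : ContDiffAt 𝕜 2 f x) (e e' : E) :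
    fderiv 𝕜 (fun y => fderiv 𝕜 f y e) x e' = fderiv 𝕜 (fderiv 𝕜 f) x e' e := by
  simp [fderiv_clm_apply (differentiableAt_fderiv_of_contDiffAt_two hf)
    (differentiableAt_const e)]

lemma deriv_deriv_comp_line (hf : ContDiffAt 𝕜 2 f x) (e : E) :
    deriv (deriv fun t : 𝕜 => f (x + t • e)) 0 = fderiv 𝕜 (fderiv 𝕜 f) x e e := by
  have hline (t : 𝕜) : HasDerivAt (fun t : 𝕜 => x + t • e) e t := by
    simpa using ((hasDerivAt_id t).smul_const e).const_add x
  have hx : x = x + (0 : 𝕜) • e := by simp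
  have hfirst : deriv (fun t : 𝕜 => f (x + t • e)) =ᶠ[𝓝 0] fun t => fderiv 𝕜 f (x + t • e) e := by
    have hdiff : ∀ᶠ y in 𝓝 (x + (0 : 𝕜) • e), DifferentiableAt 𝕜 f y :=
      hx ▸ (hf.eventually (by simp)).mono fun y hy => hy.differentiableAt (by simp)
    filter_upwards [(hline 0).continuousAt.eventually hdiff] with t ht
    exact (ht.hasFDerivAt.comp_hasDerivAt t (hline t)).deriv
  have happly : DifferentiableAt 𝕜 (fun y => fderiv 𝕜 f y e) x :=
    (differentiableAt_fderiv_of_contDiffAt_two hf).clm_apply (differentiableAt_const e)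
  rw [hfirst.deriv_eq, ← fderiv_fderiv_apply_const hf]
  exact (happly.hasFDerivAt.comp_hasDerivAt_of_eq 0 (hline 0) hx).deriv

end SecondDerivative

section Laplacian

variable {E F : Type*} [NormedAddCommGroup E] [InnerProductSpace ℝ E] [FiniteDimensional ℝ E]
  [NormedAddCommGroup F] [NormedSpace ℝ F]

lemma laplacian_eq_sum_fderiv_fderiv {ι : Type*} [Fintype ι] (b : OrthonormalBasis ι ℝ E)
    (f : E → F) (x : E) : Δ f x = ∑ i, fderiv ℝ (fderiv ℝ f) x (b i) (b i) := by
  simp [laplacian_eq_iteratedFDeriv_orthonormalBasis f b, iteratedFDeriv_two_apply]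

lemma lapR_eq_laplacian {f : E3 → ℝ} {x : E3} (hf : ContDiffAt ℝ 2 f x) : lapR f x = Δ f x := by
  simp only [lapR, e3, fderiv_fderiv_apply_const hf,
    laplacian_eq_sum_fderiv_fderiv (EuclideanSpace.basisFun (Fin 3) ℝ),
    EuclideanSpace.basisFun_apply]

lemma laplacian_nonpos_of_isLocalMax {f : E → ℝ} {x : E} (hmax : IsLocalMax f x)
    (hf : ContDiffAt ℝ 2 f x) : Δ f x ≤ 0 := by
  rw [laplacian_eq_sum_fderiv_fderiv (stdOrthonormalBasis ℝ E)]
  refine Finset.sum_nonpos fun i _ => ?_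
  set e := stdOrthonormalBasis ℝ E i
  have hline : ContinuousAt (fun t : ℝ => x + t • e) 0 := by fun_prop
  have hx : x = x + (0 : ℝ) • e := by simp
  rw [← deriv_deriv_comp_line hf]
  refine deriv_deriv_nonpos_of_isLocalMax ?_ (hf.continuousAt.comp_of_eq hline hx.symm)
  exact IsLocalMax.comp_continuous (g := fun t : ℝ => x + t • e) (hx ▸ hmax) hline

/-- The weak maximum principle, with `K \ U` in the role of the boundary; `hinfty` makes up for the
missing compactness of `K`. -/
theorem nonpos_of_laplacian_pos {K U : Set E} (hK : IsClosed K) (hU : IsOpen U) (hUK : U ⊆ K)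
    {u : E → ℝ} (hcont : ContinuousOn u K) (hC2 : ContDiffOn ℝ 2 u U)
    (hlap : ∀ x ∈ U, 0 < u x → 0 < Δ u x) (hbdry : ∀ x ∈ K \ U, u x ≤ 0)
    (hinfty : ∀ η > 0, ∀ᶠ x in cocompact E ⊓ 𝓟 K, u x ≤ η) : ∀ x ∈ K, u x ≤ 0 := by
  intro x₀ hx₀
  by_contra! hpos
  obtain ⟨x, hxK, hmax⟩ := hcont.exists_isMaxOn' hK hx₀ (hinfty (u x₀) hpos)
  have hux : 0 < u x := hpos.trans_le (hmax hx₀)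
  have hxU : x ∈ U := by
    by_contra hxU
    exact (hbdry x ⟨hxK, hxU⟩).not_gt hux
  have hUx : U ∈ 𝓝 x := hU.mem_nhds hxU
  exact (laplacian_nonpos_of_isLocalMax (hmax.isLocalMax (mem_of_superset hUx hUK))
    (hC2.contDiffAt hUx)).not_gt (hlap x hxU hux)

theorem subsolution_le_supersolution {c : ℝ} (hc : 0 < c) {K U : Set E} (hK : IsClosed K)
    (hU : IsOpen U) (hUK : U ⊆ K) {u v : E → ℝ}
    (hu : ContinuousOn u K) (hu2 : ContDiffOn ℝ 2 u U) (hsub : ∀ x ∈ U, c * u x ≤ Δ u x)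
    (hv : ContinuousOn v K) (hv2 : ContDiffOn ℝ 2 v U) (hsuper : ∀ x ∈ U, Δ v x ≤ c * v x)
    (hbdry : ∀ x ∈ K \ U, u x ≤ v x)
    (hinfty : ∀ η > 0, ∀ᶠ x in cocompact E ⊓ 𝓟 K, u x ≤ v x + η) : ∀ x ∈ K, u x ≤ v x := by
  have hlap : ∀ x ∈ U, 0 < (u - v) x → 0 < Δ (u - v) x := by
    intro x hx hpos
    have hUx : U ∈ 𝓝 x := hU.mem_nhds hx
    calc 0 < c * (u x - v x) := mul_pos hc hpos
      _ = c * u x - c * v x := mul_sub ..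
      _ ≤ Δ u x - Δ v x := sub_le_sub (hsub x hx) (hsuper x hx)
      _ = Δ (u - v) x := ((hu2.contDiffAt hUx).laplacian_sub (hv2.contDiffAt hUx)).symm
  have hdiff := nonpos_of_laplacian_pos hK hU hUK (hu.sub hv) (hu2.sub hv2) hlap
    (fun x hx => sub_nonpos.2 (hbdry x hx))
    (fun η hη => (hinfty η hη).mono fun x => sub_le_iff_le_add'.2)
  exact fun x hx => sub_nonpos.1 (hdiff x hx)

end Laplacian

section Radial

variable {E : Type*} [NormedAddCommGroup E] [InnerProductSpace ℝ E] {x : E}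

lemma hasFDerivAt_norm_of_ne_zero (hx : x ≠ 0) :
    HasFDerivAt (fun y : E => ‖y‖) (‖x‖⁻¹ • innerSL ℝ x) x := by
  have hsqrt := (hasStrictFDerivAt_norm_sq x).hasFDerivAt.sqrt (by simpa using hx)
  simp only [Real.sqrt_sq (norm_nonneg _)] at hsqrt
  convert hsqrt using 1
  module

lemma hasFDerivAt_comp_norm {φ : ℝ → ℝ} {φ' : ℝ} (hx : x ≠ 0) (hφ : HasDerivAt φ φ' ‖x‖) :
    HasFDerivAt (fun y : E => φ ‖y‖) ((φ' / ‖x‖) • innerSL ℝ x) x :=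
  (hφ.comp_hasFDerivAt x (hasFDerivAt_norm_of_ne_zero hx)).congr_fderiv <| by
    rw [smul_smul, div_eq_mul_inv]

lemma fderiv_fderiv_comp_norm_apply {φ : ℝ → ℝ} (hx : x ≠ 0) (hφ : ContDiffAt ℝ 2 φ ‖x‖) (e : E) :
    fderiv ℝ (fderiv ℝ fun y : E => φ ‖y‖) x e e =
      deriv φ ‖x‖ / ‖x‖ * ‖e‖ ^ 2 +
        (deriv (deriv φ) ‖x‖ / ‖x‖ ^ 2 - deriv φ ‖x‖ / ‖x‖ ^ 3) * inner ℝ x e ^ 2 := by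
  have hr : ‖x‖ ≠ 0 := norm_ne_zero_iff.2 hx
  have hdiff : ∀ᶠ y in 𝓝 x, DifferentiableAt ℝ φ ‖y‖ :=
    continuous_norm.continuousAt.eventually <|
      (hφ.eventually (by simp)).mono fun r h => h.differentiableAt (by simp)
  have hfirst : fderiv ℝ (fun y : E => φ ‖y‖) =ᶠ[𝓝 x]
      fun y => (deriv φ ‖y‖ / ‖y‖) • innerSL ℝ y := by
    filter_upwards [hdiff, isOpen_ne.mem_nhds hx] with y hy hy0
    exact (hasFDerivAt_comp_norm hy0 hy.hasDerivAt).fderiv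
  have hφ' : DifferentiableAt ℝ (deriv φ) ‖x‖ :=
    (differentiableAt_fderiv_of_contDiffAt_two hφ).clm_apply (differentiableAt_const 1)
  have hcoeff : HasFDerivAt (fun y : E => deriv φ ‖y‖ / ‖y‖)
      ((deriv (deriv φ) ‖x‖ / ‖x‖ ^ 2 - deriv φ ‖x‖ / ‖x‖ ^ 3) • innerSL ℝ x) x := by
    convert hasFDerivAt_comp_norm hx (hφ'.hasDerivAt.fun_div (hasDerivAt_id' ‖x‖) hr) using 2
    field_simp
  have hsecond := hcoeff.fun_smul (innerSL ℝ (E := E)).hasFDerivAt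
  rw [hfirst.fderiv_eq, hsecond.fderiv]
  change deriv φ ‖x‖ / ‖x‖ * inner ℝ e e +
    (deriv (deriv φ) ‖x‖ / ‖x‖ ^ 2 - deriv φ ‖x‖ / ‖x‖ ^ 3) * inner ℝ x e * inner ℝ x e = _
  rw [real_inner_self_eq_norm_sq]
  ring

lemma contDiffAt_const_mul_exp_neg_mul_norm (C s : ℝ) (hx : x ≠ 0) {n : WithTop ℕ∞} :
    ContDiffAt ℝ n (fun y : E => C * Real.exp (-s * ‖y‖)) x :=
  contDiffAt_const.mul (contDiffAt_const.mul (contDiffAt_norm ℝ hx)).exp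

variable [FiniteDimensional ℝ E]

theorem laplacian_comp_norm {φ : ℝ → ℝ} (hx : x ≠ 0) (hφ : ContDiffAt ℝ 2 φ ‖x‖) :
    Δ (fun y : E => φ ‖y‖) x =
      deriv (deriv φ) ‖x‖ + (finrank ℝ E - 1) / ‖x‖ * deriv φ ‖x‖ := by
  have hr : ‖x‖ ≠ 0 := norm_ne_zero_iff.2 hx
  rw [laplacian_eq_sum_fderiv_fderiv (stdOrthonormalBasis ℝ E)]
  simp only [fderiv_fderiv_comp_norm_apply hx hφ, Finset.sum_add_distrib, ← Finset.mul_sum,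
    OrthonormalBasis.sum_sq_inner_left, OrthonormalBasis.norm_eq_one, one_pow, Finset.sum_const,
    Finset.card_univ, Fintype.card_fin, nsmul_eq_mul, mul_one]
  field_simp
  ring

theorem laplacian_const_mul_exp_neg_mul_norm (C s : ℝ) (hx : x ≠ 0) :
    Δ (fun y : E => C * Real.exp (-s * ‖y‖)) x =
      (s ^ 2 - (finrank ℝ E - 1) * s / ‖x‖) * (C * Real.exp (-s * ‖x‖)) := by
  have hderiv (a : ℝ) : deriv (fun r => a * Real.exp (-s * r)) =
      fun r => a * -s * Real.exp (-s * r) := by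
    ext r
    rw [(((hasDerivAt_const_mul (-s)).exp).const_mul a).deriv]
    ring
  rw [laplacian_comp_norm (φ := fun r => C * Real.exp (-s * r)) hx (by fun_prop), hderiv, hderiv]
  ring

lemma laplacian_const_mul_exp_neg_mul_norm_le {C s : ℝ} (hC : 0 ≤ C) (hs : 0 ≤ s) (hx : x ≠ 0) :
    Δ (fun y : E => C * Real.exp (-s * ‖y‖)) x ≤ s ^ 2 * (C * Real.exp (-s * ‖x‖)) := by
  have : Nontrivial E := ⟨x, 0, hx⟩
  have hdim : (0 : ℝ) ≤ finrank ℝ E - 1 :=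
    sub_nonneg.2 (mod_cast (finrank_pos : 0 < finrank ℝ E))
  rw [laplacian_const_mul_exp_neg_mul_norm C s hx]
  gcongr
  exact sub_le_self _ (by positivity)

end Radial

section Exterior

variable {E : Type*} [NormedAddCommGroup E] [InnerProductSpace ℝ E] [FiniteDimensional ℝ E]

theorem le_const_mul_exp_neg_mul_norm {C r s : ℝ} (hC : 0 ≤ C) (hr : 0 ≤ r) (hs : 0 < s)
    {w : E → ℝ} (hcont : ContinuousOn w {x | r ≤ ‖x‖}) (hC2 : ContDiffOn ℝ 2 w {x | r < ‖x‖})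
    (hsub : ∀ x, r < ‖x‖ → s ^ 2 * w x ≤ Δ w x) (hdecay : ∀ η > 0, ∀ᶠ x in cocompact E, w x ≤ η)
    (hsphere : ∀ x, ‖x‖ = r → w x ≤ C * Real.exp (-s * r)) :
    ∀ x, r ≤ ‖x‖ → w x ≤ C * Real.exp (-s * ‖x‖) := by
  have hne (x : E) (hx : r < ‖x‖) : x ≠ 0 := norm_pos_iff.1 (hr.trans_lt hx)
  refine subsolution_le_supersolution (K := {x | r ≤ ‖x‖}) (U := {x | r < ‖x‖}) (pow_pos hs 2)
    (isClosed_le continuous_const continuous_norm) (isOpen_lt continuous_const continuous_norm)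
    (fun x (hx : r < ‖x‖) => hx.le) hcont hC2 hsub (by fun_prop)
    (fun x hx => (contDiffAt_const_mul_exp_neg_mul_norm C s (hne x hx)).contDiffWithinAt)
    (fun x hx => laplacian_const_mul_exp_neg_mul_norm_le hC hs.le (hne x hx)) ?boundary ?infinity
  case boundary =>
    rintro x ⟨hle, hnlt⟩
    have hx : ‖x‖ = r := le_antisymm (not_lt.1 hnlt) hle
    simpa only [hx] using hsphere x hx
  case infinity =>
    intro η hη
    filter_upwards [(hdecay η hη).filter_mono inf_le_left] with x hx
    exact hx.trans (le_add_of_nonneg_left (by positivity))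

theorem exterior_exponential_decay_general {c R : ℝ} (hc : 0 < c) {w : E → ℝ}
    (hcont : ContinuousOn w {x | R ≤ ‖x‖}) (hC2 : ContDiffOn ℝ 2 w {x | R < ‖x‖})
    (hsub : ∀ x, R < ‖x‖ → c * w x ≤ Δ w x)
    (hdecay : ∀ η > 0, ∀ᶠ x in cocompact E, w x ≤ η) :
    ∃ C > 0, ∀ x, R ≤ ‖x‖ → w x ≤ C * Real.exp (-√c * ‖x‖) := by
  -- Raising a negative `R` to `0` keeps the origin, where the barrier is not smooth, out of the
  -- open region and costs nothing because norms are nonnegative.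
  set r := max R 0
  have hRr : R ≤ r := le_max_left R 0
  obtain ⟨M, hM⟩ := (isCompact_sphere (0 : E) r).exists_bound_of_continuousOn
    (hcont.mono fun x hx => hRr.trans_eq (mem_sphere_zero_iff_norm.1 hx).symm)
  set C := max M 1 * Real.exp (√c * r)
  have hC : 0 < C := by positivity
  have hsphere (x : E) (hx : ‖x‖ = r) : w x ≤ C * Real.exp (-√c * r) := calc
    w x ≤ M := (le_abs_self _).trans (hM x (mem_sphere_zero_iff_norm.2 hx))
    _ ≤ max M 1 := le_max_left M 1
    _ = C * Real.exp (-√c * r) := by simp [C, mul_assoc, ← Real.exp_add]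
  refine ⟨C, hC, fun x hx => ?_⟩
  exact le_const_mul_exp_neg_mul_norm hC.le (le_max_right R 0) (Real.sqrt_pos.2 hc)
    (hcont.mono fun y hy => hRr.trans hy) (hC2.mono fun y hy => hRr.trans_lt hy)
    (fun y hy => (Real.sq_sqrt hc.le).symm ▸ hsub y (hRr.trans_lt hy)) hdecay hsphere x
    (max_le hx (norm_nonneg x))

end Exterior

/-- **Exponential decay of subsolutions on exterior domains.** If `w` is continuous on
`{|x| ≥ R}`, `C²` on `{|x| > R}`, satisfies `Δw ≥ c·w` there, and `w(x) → 0` as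
`|x| → ∞`, then `w(x) ≤ C·e^{−√c·|x|}` on `{|x| ≥ R}` for some constant `C > 0`. -/
theorem exterior_exponential_decay (c R : ℝ) (hc : 0 < c) (hR : 0 < R) (w : E3 → ℝ)
    (hcont : ContinuousOn w {x : E3 | R ≤ ‖x‖})
    (hC2 : ContDiffOn ℝ 2 w {x : E3 | R < ‖x‖})
    (hsub : ∀ x : E3, R < ‖x‖ → c * w x ≤ lapR w x)
    (hdecay : ∀ η > (0 : ℝ), ∃ ρ : ℝ, ∀ x : E3, ρ ≤ ‖x‖ → |w x| ≤ η) :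
    ∃ C > (0 : ℝ), ∀ x : E3, R ≤ ‖x‖ → w x ≤ C * Real.exp (-Real.sqrt c * ‖x‖) := by
  refine exterior_exponential_decay_general hc hcont hC2 (fun x hx => ?_) fun η hη => ?_
  · have hnhds : {x : E3 | R < ‖x‖} ∈ 𝓝 x :=
      (isOpen_lt continuous_const continuous_norm).mem_nhds hx
    exact (hsub x hx).trans_eq (lapR_eq_laplacian (hC2.contDiffAt hnhds))
  · obtain ⟨ρ, hρ⟩ := hdecay η hη
    filter_upwards [(tendsto_norm_cocompact_atTop (E := E3)).eventually_ge_atTop ρ] with x hx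
    exact (le_abs_self _).trans (hρ x hx)
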